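/- Let q be a Borel probability measure on ℝ^D, let θ_l ∈ ℝ^D be fixed, and let φ : ℝ^D → ℝ^m be measurable. Define F_q(r) = q(B_r) where B_r = {θ : ‖φ(θ) − φ(θ_l)‖₂ ≤ r}, and assume F_q is continuous with F_q(0) = 0. Fix α ∈ [0,1) and set r_α = sup{r ≥ 0 : F_q(r) ≤ α}, which is finite since F_q(r) → 1 as r → ∞. Then the sublevel set of the ball probability rank satisfies the exact identity {θ* ∈ ℝ^D : U_q(θ*) ≤ α} = B_{r_α}, and moreover q(B_{r_α}) = α. Consequently, for any Borel probability measure p on ℝ^D, p({θ* : U_q(θ*) ≤ α}) − α = p(B_{r_α}) − q(B_{r_α}). -/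

import Mathlib

open MeasureTheory
open scoped ENNReal

/-!
The rank of `θ*` is `F_q` evaluated at the radius of `θ*`, so everything rests on a fact about a
continuous monotone `F` crossing the level `α`: its sublevel set `{F ≤ α}` is a closed half-line
ending at `r_α`, and by the intermediate value theorem `F` attains `α`, hence attains it at `r_α`.
-/

section CrossingPoint

open Set

variable {X Y : Type*} [ConditionallyCompleteLinearOrder X] [TopologicalSpace X] [OrderTopology X]
  [LinearOrder Y] {f : X → Y} {a b : X} {c : Y}

theorem isGreatest_csSup_setOf_le_and_map_le (hf : Monotone f) (hf_lsc : LowerSemicontinuous f)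
    (ha : f a ≤ c) (hb : c < f b) :
    IsGreatest {x | a ≤ x ∧ f x ≤ c} (sSup {x | a ≤ x ∧ f x ≤ c}) := by
  have hclosed : IsClosed {x | a ≤ x ∧ f x ≤ c} := isClosed_Ici.inter (hf_lsc.isClosed_preimage c)
  have hbdd : BddAbove {x | a ≤ x ∧ f x ≤ c} :=
    ⟨b, fun _ hx => (hf.reflect_lt (hx.2.trans_lt hb)).le⟩
  exact hclosed.isGreatest_csSup ⟨a, le_rfl, ha⟩ hbdd

theorem map_le_iff_le_csSup (hf : Monotone f) (hf_lsc : LowerSemicontinuous f)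
    (ha : f a ≤ c) (hb : c < f b) {x : X} :
    f x ≤ c ↔ x ≤ sSup {x | a ≤ x ∧ f x ≤ c} := by
  obtain ⟨⟨ha_le, hmap_le⟩, hupper⟩ := isGreatest_csSup_setOf_le_and_map_le hf hf_lsc ha hb
  refine ⟨fun hx => ?_, fun hx => (hf hx).trans hmap_le⟩
  rcases le_total a x with hax | hxa
  · exact hupper ⟨hax, hx⟩
  · exact hxa.trans ha_le

theorem map_csSup_eq_of_continuous [DenselyOrdered X] [TopologicalSpace Y] [OrderTopology Y]
    (hf : Monotone f) (hf_cont : Continuous f) (ha : f a ≤ c) (hb : c < f b) :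
    f (sSup {x | a ≤ x ∧ f x ≤ c}) = c := by
  have hle_iff {x : X} := map_le_iff_le_csSup hf hf_cont.lowerSemicontinuous ha hb (x := x)
  obtain ⟨x, rfl⟩ : c ∈ range f :=
    mem_range_of_exists_le_of_exists_ge hf_cont ⟨a, ha⟩ ⟨b, hb.le⟩
  exact le_antisymm (hle_iff.2 le_rfl) (hf (hle_iff.1 le_rfl))

end CrossingPoint

section SublevelMeasure

open Filter Set Topology

variable {Ω X : Type*} [Preorder X]

theorem monotone_setOf_le (d : Ω → X) : Monotone fun r => {θ | d θ ≤ r} :=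
  fun _ _ hrs _ hθ => le_trans hθ hrs

theorem tendsto_measure_setOf_le_atTop [IsDirectedOrder X] [(atTop : Filter X).IsCountablyGenerated]
    [MeasurableSpace Ω] (q : Measure Ω) (d : Ω → X) :
    Tendsto (fun r => q {θ | d θ ≤ r}) atTop (𝓝 (q univ)) := by
  have hunion : ⋃ r, {θ | d θ ≤ r} = univ := iUnion_eq_univ_iff.2 fun θ => ⟨d θ, le_rfl⟩
  rw [← hunion]
  exact tendsto_measure_iUnion_atTop (monotone_setOf_le d)

end SublevelMeasure

theorem rank_sublevel_is_ball_general {Ω : Type*} [MeasurableSpace Ω] (q : Measure Ω) (d : Ω → ℝ)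
    (hcont : Continuous fun r : ℝ => q {θ | d θ ≤ r})
    {α : ℝ≥0∞} (hzero : q {θ | d θ ≤ 0} ≤ α) (hα : α < q Set.univ)
    {rα : ℝ} (hrα : rα = sSup {r : ℝ | 0 ≤ r ∧ q {θ | d θ ≤ r} ≤ α}) :
    {θs | q {θ | d θ ≤ d θs} ≤ α} = {θ | d θ ≤ rα}
    ∧ q {θ | d θ ≤ rα} = α
    ∧ ∀ p : Measure Ω, IsFiniteMeasure p →
        p.real {θs | q {θ | d θ ≤ d θs} ≤ α} - α.toReal
          = p.real {θ | d θ ≤ rα} - q.real {θ | d θ ≤ rα} := by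
  have hmono : Monotone fun r => q {θ | d θ ≤ r} := fun _ _ hrs =>
    measure_mono (monotone_setOf_le d hrs)
  obtain ⟨R, hR⟩ := ((tendsto_measure_setOf_le_atTop q d).eventually_const_lt hα).exists
  have hball : {θs | q {θ | d θ ≤ d θs} ≤ α} = {θ | d θ ≤ rα} := by
    subst hrα
    ext θs
    exact map_le_iff_le_csSup hmono hcont.lowerSemicontinuous hzero hR
  have hmass : q {θ | d θ ≤ rα} = α := by
    subst hrα
    exact map_csSup_eq_of_continuous hmono hcont hzero hR
  exact ⟨hball, hmass, fun p _ => by rw [hball, measureReal_def q, hmass]⟩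

/-- **Sublevel sets of the ball probability rank are φ-balls.** Let `q` be a Borel
probability measure on ℝ^D, `θl` a reference point, `φ` measurable, and
`F_q(r) = q(B_r)` with `B_r = {θ | ‖φ θ - φ θl‖ ≤ r}`, assumed continuous with
`F_q(0) = 0`. For `α ∈ [0,1)`, set `r_α = sup {r ≥ 0 : F_q(r) ≤ α}` (finite since
`F_q(r) → 1`). Then `{θ* : U_q(θ*) ≤ α} = B_{r_α}` and `q(B_{r_α}) = α`; consequently,
for any Borel probability measure `p`,
`p({θ* : U_q(θ*) ≤ α}) − α = p(B_{r_α}) − q(B_{r_α})`. -/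
theorem rank_sublevel_is_ball
    (D m : ℕ)
    (q : Measure (EuclideanSpace ℝ (Fin D))) [IsProbabilityMeasure q]
    (θl : EuclideanSpace ℝ (Fin D))
    (φ : EuclideanSpace ℝ (Fin D) → EuclideanSpace ℝ (Fin m))
    (hφ_meas : Measurable φ)
    (B : ℝ → Set (EuclideanSpace ℝ (Fin D)))
    (hB : ∀ r : ℝ, B r = {θ : EuclideanSpace ℝ (Fin D) | ‖φ θ - φ θl‖ ≤ r})
    (hcont : Continuous fun r : ℝ => q (B r))
    (hzero : q (B 0) = 0)
    (α : ℝ≥0∞) (hα : α < 1)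
    (rα : ℝ) (hrα : rα = sSup {r : ℝ | 0 ≤ r ∧ q (B r) ≤ α}) :
    ({θs : EuclideanSpace ℝ (Fin D) |
        q {θ : EuclideanSpace ℝ (Fin D) | ‖φ θ - φ θl‖ ≤ ‖φ θs - φ θl‖} ≤ α} = B rα)
    ∧ q (B rα) = α
    ∧ (∀ p : Measure (EuclideanSpace ℝ (Fin D)), IsProbabilityMeasure p →
        (p {θs : EuclideanSpace ℝ (Fin D) |
            q {θ : EuclideanSpace ℝ (Fin D) | ‖φ θ - φ θl‖ ≤ ‖φ θs - φ θl‖} ≤ α}).toReal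
          - α.toReal
        = (p (B rα)).toReal - (q (B rα)).toReal) := by
  obtain rfl : B = fun r => {θ | ‖φ θ - φ θl‖ ≤ r} := funext hB
  obtain ⟨hball, hmass, hdiff⟩ := rank_sublevel_is_ball_general q (fun θ => ‖φ θ - φ θl‖) hcont
    (hzero.trans_le zero_le) (hα.trans_eq measure_univ.symm) hrα
  exact ⟨hball, hmass, fun p _ => hdiff p inferInstance⟩
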